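/- Let k ∈ {0,1}. Suppose m₀ is the unique maximizer of 𝑝̃ on [0,1], that L₁^{(ℓ)}(m₀) = 0 for all 0 ≤ ℓ ≤ 2k, and that L₁^{(2k+1)}(m₀) > 0. Set W = (M − N·m₀)/N^{(2k+1)/(2k+2)}, W' = (M' − N·m₀)/N^{(2k+1)/(2k+2)}, and c₀ = 2N^{(2k+1)/(k+1)}/L₂(m₀). Then E|1 − (c₀/2)·E[(W − W')²|W]| ≤ K·(N^{−1/(2k+2)} + N^{−1}) for a constant K independent of N. -/

import Mathlib

open Real Finset MeasureTheory

noncomputable section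

/-- Dimer configurations (matchings of the complete graph on `Fin N`), encoded as
involutions of `Fin N`: fixed points are monomers, 2-cycles are dimers. -/
abbrev Dimer (N : ℕ) := {f : Fin N → Fin N // ∀ i, f (f i) = i}

/-- The set of monomers (dimer-free vertices) of a dimer configuration. -/
def monomers {N : ℕ} (D : Dimer N) : Finset (Fin N) :=
  Finset.univ.filter fun i => D.1 i = i

/-- Monomer density `m(D) = |𝓜(D)|/N`. -/
def mDim {N : ℕ} (D : Dimer N) : ℝ := ((monomers D).card : ℝ) / N

/-- The parameter `b = (log N)/2 + h - J`. -/
def bIMD (N : ℕ) (J h : ℝ) : ℝ := Real.log N / 2 + h - J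

/-- The Gibbs weight `exp(-H(D)) = exp(N (a m(D)^2 + b m(D)))` with `a = J`. -/
def wDim (N : ℕ) (J h : ℝ) (D : Dimer N) : ℝ :=
  Real.exp (N * (J * mDim D ^ 2 + bIMD N J h * mDim D))

/-- The probability of an event `A` under the IMD Gibbs measure. -/
def probDim (N : ℕ) (J h : ℝ) (A : Dimer N → Prop) : ℝ :=
  (∑ D : Dimer N, Set.indicator {D | A D} (wDim N J h) D) / ∑ D : Dimer N, wDim N J h D

/-- The conditional probability `ℙ(A | B)` under the IMD Gibbs measure. -/
def condProbDim (N : ℕ) (J h : ℝ) (A B : Dimer N → Prop) : ℝ :=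
  (∑ D : Dimer N, Set.indicator {D | A D ∧ B D} (wDim N J h) D) /
    ∑ D : Dimer N, Set.indicator {D | B D} (wDim N J h) D

/-- `g(x) = (√(e^{4x} + 4 e^{2x}) - e^{2x})/2`. -/
def gFun (x : ℝ) : ℝ := (Real.sqrt (Real.exp (4*x) + 4 * Real.exp (2*x)) - Real.exp (2*x)) / 2

/-- `τ(x) = (2x-1)J + h`. -/
def tauFun (J h x : ℝ) : ℝ := (2*x - 1) * J + h

/-- `𝑝̃(m) = -J m² - (1 - g(τ(m)) + log(1 - g(τ(m))))/2`. -/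
def ptilde (J h m : ℝ) : ℝ :=
  -J * m^2 - (1 - gFun (tauFun J h m) + Real.log (1 - gFun (tauFun J h m))) / 2

/-- The CDF of a centered Gaussian with variance `v`, evaluated at `z`. -/
def gaussCDF (v : ℝ) (z : ℝ) : ℝ :=
  (ProbabilityTheory.gaussianReal 0 (Real.toNNReal v) (Set.Iic z)).toReal

/-- Spin configurations `Σ = {0,1}^N`. -/
abbrev Config (N : ℕ) := Fin N → Bool

/-- `𝓐(σ) = {i : σ_i = 1}`. -/
def ASet {N : ℕ} (σ : Config N) : Finset (Fin N) := Finset.univ.filter fun i => σ i = true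

/-- `M(σ) = ∑ σ_i`. -/
def Msum {N : ℕ} (σ : Config N) : ℕ := (ASet σ).card

/-- Magnetization `m(σ) = M(σ)/N`. -/
def mConf {N : ℕ} (σ : Config N) : ℝ := (Msum σ : ℝ) / N

/-- `D(σ)`: the number of dimer configurations `D` with `𝓜(D) = 𝓐(σ)`. -/
def Dcount (N : ℕ) (σ : Config N) : ℕ :=
  (Finset.univ.filter fun D : Dimer N => monomers D = ASet σ).card

/-- The weight `D(σ) exp(-H(σ))` of the weighted Curie–Weiss model. -/
def wConf (N : ℕ) (J h : ℝ) (σ : Config N) : ℝ :=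
  (Dcount N σ : ℝ) * Real.exp (N * (J * mConf σ ^ 2 + bIMD N J h * mConf σ))

/-- The probability of an event `A` under the weighted Curie–Weiss Gibbs measure. -/
def probConf (N : ℕ) (J h : ℝ) (A : Config N → Prop) : ℝ :=
  (∑ σ : Config N, Set.indicator {σ | A σ} (wConf N J h) σ) / ∑ σ : Config N, wConf N J h σ

/-- Expectation under the weighted Curie–Weiss Gibbs measure. -/
def EConf (N : ℕ) (J h : ℝ) (f : Config N → ℝ) : ℝ :=
  (∑ σ : Config N, wConf N J h σ * f σ) / ∑ σ : Config N, wConf N J h σ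

/-- `L₁(m) = 2(1-m)(m² - (1-m)e^{2τ(m)})/((1-m) + e^{2τ(m)})`. -/
def Lone (J h m : ℝ) : ℝ :=
  2*(1-m)*(m^2 - (1-m)*Real.exp (2 * tauFun J h m)) / ((1-m) + Real.exp (2 * tauFun J h m))

/-- `L₂(m) = 4(1-m)(m² + (1-m)e^{2τ(m)})/((1-m) + e^{2τ(m)})`. -/
def Ltwo (J h m : ℝ) : ℝ :=
  4*(1-m)*(m^2 + (1-m)*Real.exp (2 * tauFun J h m)) / ((1-m) + Real.exp (2 * tauFun J h m))

/-- The configuration obtained from `σ` by setting the spins at `u, v` to `s, t`. -/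
def upd {N : ℕ} (σ : Config N) (u v : Fin N) (s t : Bool) : Config N :=
  fun i => if i = u then s else if i = v then t else σ i

/-- The edges of the complete graph, enumerated as ordered pairs `u < v`. -/
def cEdges (N : ℕ) : Finset (Fin N × Fin N) := Finset.univ.filter fun p => p.1 < p.2

/-- The probability of resampling the pair of spins at `(u,v)` to `(s,t)`:
the conditional distribution of `(σ_u, σ_v)` given `(σ_i)_{i ≠ u,v}`. -/
def qCond (N : ℕ) (J h : ℝ) (σ : Config N) (u v : Fin N) (s t : Bool) : ℝ :=
  wConf N J h (upd σ u v s t) / ∑ st : Bool × Bool, wConf N J h (upd σ u v st.1 st.2)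

/-- `E[F(σ, σ') | σ]` for the exchangeable pair `(σ, σ')` obtained by resampling the
spins at a uniformly chosen edge. -/
def condE2 (N : ℕ) (J h : ℝ) (F : Config N → Config N → ℝ) (σ : Config N) : ℝ :=
  ((cEdges N).card : ℝ)⁻¹ * ∑ p ∈ cEdges N, ∑ st : Bool × Bool,
    qCond N J h σ p.1 p.2 st.1 st.2 * F σ (upd σ p.1 p.2 st.1 st.2)

/-- The weight of the Gibbs measure conditioned on the event `S`. -/
def wCond (N : ℕ) (J h : ℝ) (S : Config N → Prop) (σ : Config N) : ℝ :=
  Set.indicator {σ | S σ} (wConf N J h) σ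

/-- `ℙ_ℓ(A) = ℙ(A | S)`, probability under the conditioned Gibbs measure. -/
def probL (N : ℕ) (J h : ℝ) (S A : Config N → Prop) : ℝ :=
  (∑ σ : Config N, Set.indicator {σ | A σ} (wCond N J h S) σ) / ∑ σ : Config N, wCond N J h S σ

/-- Expectation under the conditioned Gibbs measure `ℙ(·|S)`. -/
def EL (N : ℕ) (J h : ℝ) (S : Config N → Prop) (f : Config N → ℝ) : ℝ :=
  (∑ σ : Config N, wCond N J h S σ * f σ) / ∑ σ : Config N, wCond N J h S σ

/-- Resampling probability for the conditioned measure `ℙ(·|S)`. -/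
def qCondL (N : ℕ) (J h : ℝ) (S : Config N → Prop) (σ : Config N) (u v : Fin N)
    (s t : Bool) : ℝ :=
  wCond N J h S (upd σ u v s t) / ∑ st : Bool × Bool, wCond N J h S (upd σ u v st.1 st.2)

/-- `E_ℓ[F(σ, σ') | σ]` for the exchangeable pair under the conditioned measure. -/
def condE2L (N : ℕ) (J h : ℝ) (S : Config N → Prop) (F : Config N → Config N → ℝ)
    (σ : Config N) : ℝ :=
  ((cEdges N).card : ℝ)⁻¹ * ∑ p ∈ cEdges N, ∑ st : Bool × Bool,
    qCondL N J h S σ p.1 p.2 st.1 st.2 * F σ (upd σ p.1 p.2 st.1 st.2)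

/-- The maximizer set `O` of `𝑝̃` on `[0,1]`. -/
def maxSet (J h : ℝ) : Set ℝ :=
  {x | x ∈ Set.Icc (0:ℝ) 1 ∧ ∀ y ∈ Set.Icc (0:ℝ) 1, ptilde J h y ≤ ptilde J h x}

end

/-!
Turning a down-down pair of spins up multiplies the total weight of a level of the magnetization by
an explicit ratio. Summed against a test function this is a Stein identity: it bounds
`E[L₁(m)(m - m₀)]` by `O(1/N)`. The free energy of the level weights lies below `𝑝̃` and agrees with
it at critical points, so `m₀` is its unique maximizer and `m` is exponentially close to it; near
`m₀` the product `L₁(m)(m - m₀)` dominates `c (m - m₀)^(2k+2)`. Hence `E[(m - m₀)^(2k+2)] = O(1/N)`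
and `E|m - m₀| = O(N^(-1/(2k+2)))`. Finally `E[(M - M')² | σ]` is a Lipschitz function of `m` and
`1/N` which takes the value `L₂(m)` at `1/N = 0`.
-/

/-! ### Perfect matchings -/

/-- The number of perfect matchings of the complete graph on `n` vertices: `(n - 1)!!` for even `n`
and `0` for odd `n`. -/
def perfectMatchingCount : ℕ → ℕ
  | 0 => 1
  | 1 => 0
  | n + 2 => (n + 1) * perfectMatchingCount n

/-- The dimer configurations whose dimers cover exactly the vertices of `S`. -/
def dimersCovering {N : ℕ} (S : Finset (Fin N)) : Finset (Dimer N) :=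
  Finset.univ.filter fun D => ∀ i, D.1 i ≠ i ↔ i ∈ S

theorem mem_dimersCovering {N : ℕ} {S : Finset (Fin N)} {D : Dimer N} :
    D ∈ dimersCovering S ↔ ∀ i, D.1 i ≠ i ↔ i ∈ S := by
  simp [dimersCovering]

theorem involutive_comp_swap {α : Type*} [DecidableEq α] {f : α → α} (hf : f.Involutive) {u v : α}
    (huv : f u = v ∨ f u = u ∧ f v = v) : (f ∘ Equiv.swap u v).Involutive := by
  intro i
  simp only [Function.comp_apply, hf.injective.map_swap, hf _]
  rcases huv with hu | ⟨hu, hv⟩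
  · rw [hu, ← hf.eq_iff.1 hu, Equiv.swap_comm, Equiv.swap_apply_self]
  · rw [hu, hv, Equiv.swap_apply_self]

/-- Removing the dimer `uv`, or inserting it when `u` and `v` are monomers, is composition with the
transposition of `u` and `v`. -/
def toggleDimer {N : ℕ} (u v : Fin N) (D : Dimer N) (huv : D.1 u = v ∨ D.1 u = u ∧ D.1 v = v) :
    Dimer N :=
  ⟨D.1 ∘ Equiv.swap u v, involutive_comp_swap D.2 huv⟩

theorem card_dimersCovering_filter {N : ℕ} {S : Finset (Fin N)} {u v : Fin N}
    (hu : u ∈ S) (hv : v ∈ S) (huv : u ≠ v) :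
    ((dimersCovering S).filter fun D => D.1 u = v).card =
      (dimersCovering ((S.erase u).erase v)).card := by
  have hfix : ∀ D ∈ dimersCovering ((S.erase u).erase v), D.1 u = u ∧ D.1 v = v := by
    intro D hD
    rw [mem_dimersCovering] at hD
    exact ⟨not_not.1 fun h => by simpa using (hD u).1 h,
      not_not.1 fun h => by simpa using (hD v).1 h⟩
  refine Finset.card_bij' (fun D hD => toggleDimer u v D (.inl (Finset.mem_filter.1 hD).2))
    (fun D hD => toggleDimer u v D (.inr (hfix D hD))) (fun D hD => ?_) (fun D hD => ?_)
    (fun D _ => ?_) (fun D _ => ?_)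
  · obtain ⟨hD, hDu⟩ := Finset.mem_filter.1 hD
    have hDv : D.1 v = u := by rw [← hDu, D.2]
    refine mem_dimersCovering.2 fun i => ?_
    rcases eq_or_ne i u with rfl | hiu
    · simp [toggleDimer, hDv]
    rcases eq_or_ne i v with rfl | hiv
    · simp [toggleDimer, hDu]
    simpa [toggleDimer, Equiv.swap_apply_of_ne_of_ne hiu hiv, hiu, hiv]
      using mem_dimersCovering.1 hD i
  · obtain ⟨hDu, hDv⟩ := hfix D hD
    refine Finset.mem_filter.2 ⟨mem_dimersCovering.2 fun i => ?_, by simp [toggleDimer, hDv]⟩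
    rcases eq_or_ne i u with rfl | hiu
    · simp [toggleDimer, hDv, huv.symm, hu]
    rcases eq_or_ne i v with rfl | hiv
    · simp [toggleDimer, hDu, huv, hv]
    simpa [toggleDimer, Equiv.swap_apply_of_ne_of_ne hiu hiv, hiu, hiv]
      using mem_dimersCovering.1 hD i
  all_goals ext; simp [toggleDimer]

theorem card_dimersCovering {N : ℕ} (S : Finset (Fin N)) :
    (dimersCovering S).card = perfectMatchingCount S.card := by
  induction hn : S.card using Nat.strong_induction_on generalizing S with
  | _ n ih =>
  rcases S.eq_empty_or_nonempty with rfl | ⟨u, hu⟩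
  · obtain rfl : n = 0 := by simpa using hn.symm
    refine Finset.card_eq_one.2 ⟨⟨id, fun _ => rfl⟩, ?_⟩
    ext D
    simp [mem_dimersCovering, Subtype.ext_iff, funext_iff]
  have hpartner : ∀ D ∈ dimersCovering S, D.1 u ∈ S.erase u := by
    intro D hD
    rw [mem_dimersCovering] at hD
    have hDu : D.1 u ≠ u := (hD u).2 hu
    exact Finset.mem_erase.2 ⟨hDu, (hD _).1 (by rw [D.2 u]; exact hDu.symm)⟩
  have hfiber : ∀ v ∈ S.erase u, ((dimersCovering S).filter fun D => D.1 u = v).card =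
      perfectMatchingCount (n - 2) := by
    intro v hv
    rw [card_dimersCovering_filter hu (Finset.mem_of_mem_erase hv) (Finset.ne_of_mem_erase hv).symm]
    refine ih (n - 2) (by have := Finset.card_pos.2 ⟨u, hu⟩; omega) _ ?_
    rw [Finset.card_erase_of_mem hv, Finset.card_erase_of_mem hu, hn]
    omega
  rw [Finset.card_eq_sum_card_fiberwise hpartner, Finset.sum_congr rfl hfiber, Finset.sum_const,
    Finset.card_erase_of_mem hu, hn, smul_eq_mul]
  match n, (hn ▸ Finset.card_pos.2 ⟨u, hu⟩ : 0 < n) with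
  | 1, _ => simp [perfectMatchingCount]
  | m + 2, _ => simp [perfectMatchingCount]

theorem Dcount_eq {N : ℕ} (σ : Config N) :
    Dcount N σ = perfectMatchingCount (N - Msum σ) := by
  have hcompl : ((ASet σ)ᶜ).card = N - Msum σ := by
    rw [Finset.card_compl, Fintype.card_fin, Msum]
  rw [← hcompl, ← card_dimersCovering, Dcount]
  congr 1
  ext D
  simp only [Finset.mem_filter, Finset.mem_univ, true_and, mem_dimersCovering, Finset.ext_iff,
    monomers, Finset.mem_compl]
  exact forall_congr' fun i => not_iff_not.symm

theorem perfectMatchingCount_of_odd {n : ℕ} (hn : Odd n) : perfectMatchingCount n = 0 := by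
  induction n using Nat.twoStepInduction with
  | zero => simp at hn
  | one => rfl
  | more n ih _ => rw [perfectMatchingCount, ih (by simpa [parity_simps] using hn), mul_zero]

theorem perfectMatchingCount_sq_le (n : ℕ) : perfectMatchingCount n ^ 2 ≤ n.factorial := by
  induction n using Nat.twoStepInduction with
  | zero => simp [perfectMatchingCount]
  | one => simp [perfectMatchingCount]
  | more n ih _ =>
    calc perfectMatchingCount (n + 2) ^ 2
        = (n + 1) * ((n + 1) * perfectMatchingCount n ^ 2) := by rw [perfectMatchingCount]; ring
      _ ≤ (n + 2) * ((n + 1) * n.factorial) := by gcongr; omega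
      _ = (n + 2).factorial := by rw [Nat.factorial_succ, Nat.factorial_succ]

theorem factorial_le_perfectMatchingCount_sq {n : ℕ} (hn : Even n) :
    n.factorial ≤ (n + 1) * perfectMatchingCount n ^ 2 := by
  induction n using Nat.twoStepInduction with
  | zero => simp [perfectMatchingCount]
  | one => simp at hn
  | more n ih _ =>
    calc (n + 2).factorial
        = (n + 2) * ((n + 1) * n.factorial) := by rw [Nat.factorial_succ, Nat.factorial_succ]
      _ ≤ (n + 3) * ((n + 1) * ((n + 1) * perfectMatchingCount n ^ 2)) := by
        gcongr
        · omega
        · exact ih (by simpa [parity_simps] using hn)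
      _ = (n + 2 + 1) * perfectMatchingCount (n + 2) ^ 2 := by rw [perfectMatchingCount]; ring

theorem perfectMatchingCount_pos {n : ℕ} (hn : Even n) : 0 < perfectMatchingCount n := by
  refine Nat.pos_of_ne_zero fun h0 => n.factorial_ne_zero ?_
  simpa [h0] using factorial_le_perfectMatchingCount_sq hn

/-! ### The law of the number of monomers -/

section Levels

variable {N : ℕ} {J h : ℝ}

/-- The weight of a configuration with `j` up spins. -/
noncomputable def spinWeight (N : ℕ) (J h : ℝ) (j : ℕ) : ℝ :=
  (perfectMatchingCount (N - j) : ℝ) *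
    Real.exp (N * (J * ((j : ℝ) / N) ^ 2 + bIMD N J h * ((j : ℝ) / N)))

/-- The total weight of the configurations with `j` up spins. -/
noncomputable def levelWeight (N : ℕ) (J h : ℝ) (j : ℕ) : ℝ := (N.choose j : ℝ) * spinWeight N J h j

theorem wConf_eq (σ : Config N) : wConf N J h σ = spinWeight N J h (Msum σ) := by
  rw [wConf, Dcount_eq, spinWeight, mConf]

theorem Msum_le (σ : Config N) : Msum σ ≤ N := by
  simpa [Msum] using Finset.card_le_univ (ASet σ)

theorem mConf_mem_Icc (σ : Config N) : mConf σ ∈ Set.Icc (0 : ℝ) 1 :=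
  ⟨by unfold mConf; positivity, div_le_one_of_le₀ (mod_cast Msum_le σ) (Nat.cast_nonneg N)⟩

theorem spinWeight_nonneg (j : ℕ) : 0 ≤ spinWeight N J h j := by
  unfold spinWeight; positivity

theorem wConf_nonneg (σ : Config N) : 0 ≤ wConf N J h σ := by
  rw [wConf_eq]; exact spinWeight_nonneg _

theorem spinWeight_of_odd {j : ℕ} (hj : Odd (N - j)) : spinWeight N J h j = 0 := by
  simp [spinWeight, perfectMatchingCount_of_odd hj]

theorem spinWeight_pos {j : ℕ} (hj : Even (N - j)) : 0 < spinWeight N J h j := by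
  have := perfectMatchingCount_pos hj
  unfold spinWeight; positivity

theorem even_sub_Msum_of_wConf_ne_zero {σ : Config N} (hσ : wConf N J h σ ≠ 0) :
    Even (N - Msum σ) := by
  rw [wConf_eq] at hσ
  exact Nat.not_odd_iff_even.1 fun hodd => hσ (spinWeight_of_odd hodd)

theorem sum_wConf_mul (F : ℕ → ℝ) :
    ∑ σ : Config N, wConf N J h σ * F (Msum σ) =
      ∑ j ∈ Finset.range (N + 1), levelWeight N J h j * F j := by
  have hsets : ∑ σ : Config N, wConf N J h σ * F (Msum σ) =
      ∑ s ∈ (Finset.univ : Finset (Fin N)).powerset, spinWeight N J h s.card * F s.card := by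
    refine Finset.sum_bij' (fun σ _ => ASet σ) (fun s _ i => decide (i ∈ s))
      (by simp) (by simp) (fun σ _ => ?_) (fun s _ => ?_) (fun σ _ => by rw [wConf_eq]; rfl)
    all_goals ext i; simp [ASet]
  rw [hsets, Finset.sum_powerset_apply_card (fun j => spinWeight N J h j * F j)]
  simp [levelWeight, mul_assoc]

theorem sum_wConf_pos : 0 < ∑ σ : Config N, wConf N J h σ := by
  refine Finset.sum_pos' (fun σ _ => wConf_nonneg σ) ⟨fun _ => true, Finset.mem_univ _, ?_⟩
  rw [wConf_eq]
  apply spinWeight_pos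
  simp [Msum, ASet]

theorem spinWeight_add_two {j : ℕ} (hj : j + 2 ≤ N) :
    spinWeight N J h (j + 2) * ((N : ℝ) - j - 1) =
      spinWeight N J h j * (N * Real.exp (2 * tauFun J h (j / N) + 4 * J * (1 / N))) := by
  have hN : (0 : ℝ) < N := by exact_mod_cast (by omega : 0 < N)
  have hmatch : (perfectMatchingCount (N - j) : ℝ) =
      ((N : ℝ) - j - 1) * perfectMatchingCount (N - (j + 2)) := by
    obtain ⟨n, rfl⟩ : ∃ n, N = j + 2 + n := ⟨N - (j + 2), by omega⟩
    rw [show j + 2 + n - (j + 2) = n by omega, show j + 2 + n - j = n + 2 by omega,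
      perfectMatchingCount]
    push_cast
    ring
  have hexp : Real.exp (N * (J * (((j + 2 : ℕ) : ℝ) / N) ^ 2 + bIMD N J h * ((j + 2 : ℕ) / N))) =
      Real.exp (N * (J * ((j : ℝ) / N) ^ 2 + bIMD N J h * (j / N))) *
        (N * Real.exp (2 * tauFun J h (j / N) + 4 * J * (1 / N))) := by
    rw [← Real.exp_log hN, ← Real.exp_add, ← Real.exp_add, Real.exp_log hN, bIMD, tauFun]
    push_cast
    congr 1
    field_simp
    ring
  rw [spinWeight, spinWeight, hexp, hmatch]
  ring

theorem choose_add_two_mul {n k : ℕ} (hk : k ≤ n) :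
    (n.choose (k + 2) : ℝ) * ((k + 2) * (k + 1)) = n.choose k * ((n - k) * (n - k - 1)) := by
  have hsucc : ((n.choose (k + 1) * (k + 1) : ℕ) : ℝ) = (n.choose k * (n - k) : ℕ) :=
    congrArg _ (Nat.choose_succ_right_eq n k)
  have hsucc₂ : ((n.choose (k + 2) * (k + 2) : ℕ) : ℝ) = (n.choose (k + 1) * (n - (k + 1)) : ℕ) :=
    congrArg _ (Nat.choose_succ_right_eq n (k + 1))
  rcases hk.eq_or_lt with rfl | hlt
  · simp [Nat.choose_eq_zero_of_lt]
  push_cast [Nat.cast_sub hk, Nat.cast_sub hlt] at hsucc hsucc₂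
  linear_combination (k + 1 : ℝ) * hsucc₂ + ((n : ℝ) - k - 1) * hsucc

theorem levelWeight_add_two {j : ℕ} (hj : j + 2 ≤ N) :
    levelWeight N J h (j + 2) * ((j + 2) * (j + 1)) =
      levelWeight N J h j *
        (N * (N - j) * Real.exp (2 * tauFun J h (j / N) + 4 * J * (1 / N))) := by
  unfold levelWeight
  linear_combination spinWeight N J h (j + 2) * choose_add_two_mul (show j ≤ N by omega) +
    (N.choose j : ℝ) * (N - j) * spinWeight_add_two (J := J) (h := h) hj

theorem sum_levelWeight_balance (hN : 1 ≤ N) (φ : ℝ → ℝ) :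
    ∑ j ∈ Finset.range (N + 1), levelWeight N J h j * (j * (j - 1) * φ (j - 2)) =
      ∑ j ∈ Finset.range (N + 1), levelWeight N J h j *
        (N * (N - j) * Real.exp (2 * tauFun J h (j / N) + 4 * J * (1 / N)) * φ j) := by
  obtain ⟨n, rfl⟩ : ∃ n, N = n + 1 := ⟨N - 1, by omega⟩
  have hparity : levelWeight (n + 1) J h n = 0 := by
    rw [levelWeight, spinWeight_of_odd (by simp), mul_zero]
  rw [Finset.sum_range_succ', Finset.sum_range_succ', Finset.sum_range_succ _ (n + 1),
    Finset.sum_range_succ _ n, hparity]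
  simp only [zero_add, Nat.cast_zero, Nat.cast_one, sub_self, zero_mul, mul_zero, add_zero]
  refine Finset.sum_congr rfl fun j hj => ?_
  have hstep := levelWeight_add_two (J := J) (h := h)
    (show j + 2 ≤ n + 1 by have := Finset.mem_range.1 hj; omega)
  push_cast at hstep ⊢
  rw [show (j : ℝ) + 1 + 1 - 2 = j by ring]
  linear_combination φ j * hstep

end Levels

/-! ### Expectations -/

section Expectation

variable {N : ℕ} {J h : ℝ}

theorem EConf_mono {f g : Config N → ℝ} (hfg : ∀ σ, wConf N J h σ ≠ 0 → f σ ≤ g σ) :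
    EConf N J h f ≤ EConf N J h g := by
  refine div_le_div_of_nonneg_right (Finset.sum_le_sum fun σ _ => ?_) sum_wConf_pos.le
  by_cases h0 : wConf N J h σ = 0
  · simp [h0]
  · exact mul_le_mul_of_nonneg_left (hfg σ h0) (wConf_nonneg σ)

theorem EConf_add (f g : Config N → ℝ) :
    EConf N J h (fun σ => f σ + g σ) = EConf N J h f + EConf N J h g := by
  simp [EConf, mul_add, Finset.sum_add_distrib, add_div]

theorem EConf_const_mul (c : ℝ) (f : Config N → ℝ) :
    EConf N J h (fun σ => c * f σ) = c * EConf N J h f := by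
  simp only [EConf, mul_left_comm _ c, ← Finset.mul_sum, mul_div_assoc]

theorem EConf_const (c : ℝ) : EConf N J h (fun _ => c) = c := by
  rw [EConf, ← Finset.sum_mul, mul_div_cancel_left₀ _ sum_wConf_pos.ne']

theorem EConf_balance (hN : 1 ≤ N) (φ : ℝ → ℝ) :
    EConf N J h (fun σ => mConf σ * (mConf σ - 1 / N) * φ (mConf σ - 2 * (1 / N))) =
      EConf N J h (fun σ => (1 - mConf σ) *
        Real.exp (2 * tauFun J h (mConf σ) + 4 * J * (1 / N)) * φ (mConf σ)) := by
  have hN0 : (N : ℝ) ≠ 0 := by exact_mod_cast (by omega : N ≠ 0)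
  unfold EConf mConf
  congr 1
  rw [sum_wConf_mul fun j => (j : ℝ) / N * (j / N - 1 / N) * φ (j / N - 2 * (1 / N)),
    sum_wConf_mul fun j => (1 - (j : ℝ) / N) *
      Real.exp (2 * tauFun J h (j / N) + 4 * J * (1 / N)) * φ (j / N)]
  convert sum_levelWeight_balance hN (fun x => φ (x / N) / (N : ℝ) ^ 2) using 2 with j _ j _
  · rw [sub_div]; field_simp
  · field_simp

end Expectation

/-! ### The free energy -/

/-- The exponential growth rate of `levelWeight` at magnetization `m`; it is dominated by `ptilde`,
with equality at the critical points of `ptilde`. -/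
noncomputable def freeEnergy (J h m : ℝ) : ℝ :=
  J * m ^ 2 + (h - J) * m + Real.negMulLog m + Real.negMulLog (1 - m) / 2 + m / 2 - 1 / 2

theorem continuous_freeEnergy (J h : ℝ) : Continuous (freeEnergy J h) := by
  have : Continuous fun m : ℝ => Real.negMulLog (1 - m) :=
    Real.continuous_negMulLog.comp (by fun_prop)
  have := Real.continuous_negMulLog
  unfold freeEnergy
  fun_prop

theorem gFun_sq (x : ℝ) : gFun x ^ 2 = (1 - gFun x) * Real.exp (2 * x) := by
  have hE : Real.exp (4 * x) = Real.exp (2 * x) ^ 2 := by rw [sq, ← Real.exp_add]; ring_nf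
  have hsqrt := Real.sq_sqrt (show 0 ≤ Real.exp (4 * x) + 4 * Real.exp (2 * x) by positivity)
  unfold gFun
  linear_combination (1 / 4) * hsqrt + (1 / 4) * hE

theorem gFun_pos (x : ℝ) : 0 < gFun x := by
  have hE : Real.exp (4 * x) = Real.exp (2 * x) ^ 2 := by rw [sq, ← Real.exp_add]; ring_nf
  refine half_pos (sub_pos.2 (Real.lt_sqrt_of_sq_lt ?_))
  linarith [Real.exp_pos (2 * x)]

theorem gFun_lt_one (x : ℝ) : gFun x < 1 := by
  have hpos : 0 < (1 - gFun x) * Real.exp (2 * x) := gFun_sq x ▸ pow_pos (gFun_pos x) 2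
  exact sub_pos.1 (pos_of_mul_pos_left hpos (Real.exp_pos _).le)

theorem eq_gFun {x m : ℝ} (hm0 : 0 ≤ m) (hm : m ^ 2 = (1 - m) * Real.exp (2 * x)) :
    m = gFun x := by
  have hfactor : (m - gFun x) * (m + gFun x + Real.exp (2 * x)) = 0 := by
    linear_combination hm - gFun_sq x
  have hsum : m + gFun x + Real.exp (2 * x) ≠ 0 := by have := gFun_pos x; positivity
  exact sub_eq_zero.1 ((mul_eq_zero_iff_right hsum).1 hfactor)

theorem two_mul_log_gFun (x : ℝ) : 2 * Real.log (gFun x) = Real.log (1 - gFun x) + 2 * x := by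
  have hlog := congrArg Real.log (gFun_sq x)
  rw [Real.log_mul (sub_pos.2 (gFun_lt_one x)).ne' (Real.exp_pos _).ne', Real.log_exp,
    Real.log_pow] at hlog
  exact_mod_cast hlog

theorem mul_log_add_negMulLog_le {x y : ℝ} (hx : 0 ≤ x) (hy : 0 < y) :
    x * Real.log y + Real.negMulLog x ≤ y - x := by
  rcases hx.eq_or_lt with rfl | hx
  · simpa using hy.le
  calc x * Real.log y + Real.negMulLog x = x * Real.log (y / x) := by
        rw [Real.log_div hy.ne' hx.ne', Real.negMulLog]; ring
    _ ≤ x * (y / x - 1) := by gcongr; exact Real.log_le_sub_one_of_pos (by positivity)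
    _ = y - x := by field_simp

theorem freeEnergy_le_ptilde {J h m : ℝ} (hm : m ∈ Set.Icc (0 : ℝ) 1) :
    freeEnergy J h m ≤ ptilde J h m := by
  have hgibbs := mul_log_add_negMulLog_le hm.1 (gFun_pos (tauFun J h m))
  have hgibbs' := mul_log_add_negMulLog_le (sub_nonneg.2 hm.2)
    (sub_pos.2 (gFun_lt_one (tauFun J h m)))
  have hlog := congrArg (m * ·) (two_mul_log_gFun (tauFun J h m))
  have hτ : m * (2 * tauFun J h m) = m * (2 * ((2 * m - 1) * J + h)) := rfl
  simp only [mul_add, hτ] at hlog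
  unfold freeEnergy ptilde
  linarith

theorem freeEnergy_eq_ptilde {J h m : ℝ} (hm0 : 0 ≤ m)
    (hm : m ^ 2 = (1 - m) * Real.exp (2 * tauFun J h m)) :
    freeEnergy J h m = ptilde J h m := by
  have hlog := two_mul_log_gFun (tauFun J h m)
  have hτ : 2 * tauFun J h m = 2 * ((2 * m - 1) * J + h) := rfl
  rw [← eq_gFun hm0 hm, hτ] at hlog
  rw [ptilde, ← eq_gFun hm0 hm, freeEnergy, Real.negMulLog, Real.negMulLog]
  linear_combination (-m / 2) * hlog

theorem freeEnergy_lt_of_unique_max_ptilde {J h m₀ : ℝ} (hm₀ : 0 ≤ m₀)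
    (hcrit : m₀ ^ 2 = (1 - m₀) * Real.exp (2 * tauFun J h m₀))
    (hmax : ∀ m ∈ Set.Icc (0 : ℝ) 1, ptilde J h m ≤ ptilde J h m₀)
    (huniq : ∀ m ∈ Set.Icc (0 : ℝ) 1, ptilde J h m = ptilde J h m₀ → m = m₀) :
    ∀ m ∈ Set.Icc (0 : ℝ) 1, m ≠ m₀ → freeEnergy J h m < freeEnergy J h m₀ := fun m hm hne =>
  calc freeEnergy J h m ≤ ptilde J h m := freeEnergy_le_ptilde hm
    _ < ptilde J h m₀ := (hmax m hm).lt_of_ne fun heq => hne (huniq m hm heq)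
    _ = freeEnergy J h m₀ := (freeEnergy_eq_ptilde hm₀ hcrit).symm

/-! ### Concentration of the magnetization -/

theorem le_log_factorial (n : ℕ) : n * Real.log n - n ≤ Real.log n.factorial := by
  rcases n.eq_zero_or_pos with rfl | hn
  · simp
  have hpow := Real.log_le_log (by positivity)
    (Real.pow_div_factorial_le_exp (n : ℝ) (Nat.cast_nonneg n) n)
  rw [Real.log_div (by positivity) (by positivity), Real.log_pow, Real.log_exp] at hpow
  linarith

theorem mul_log_add_one_sub_log_le {x : ℝ} (hx : 0 ≤ x) :
    x * (Real.log (x + 1) - Real.log x) ≤ 1 := by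
  rcases hx.eq_or_lt with rfl | hx
  · simp
  calc x * (Real.log (x + 1) - Real.log x) = x * Real.log ((x + 1) / x) := by
        rw [Real.log_div (by positivity) hx.ne']
    _ ≤ x * ((x + 1) / x - 1) := by gcongr; exact Real.log_le_sub_one_of_pos (by positivity)
    _ = 1 := by field_simp; ring

theorem one_le_mul_log_add_one_sub_log {x : ℝ} (hx : 0 < x) :
    1 ≤ (x + 1) * (Real.log (x + 1) - Real.log x) := by
  calc (1 : ℝ) = (x + 1) * (1 - ((x + 1) / x)⁻¹) := by field_simp; ring
    _ ≤ (x + 1) * Real.log ((x + 1) / x) := by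
        gcongr; exact Real.one_sub_inv_le_log_of_pos (by positivity)
    _ = (x + 1) * (Real.log (x + 1) - Real.log x) := by
        rw [Real.log_div (by positivity) hx.ne']

theorem log_factorial_le (n : ℕ) :
    Real.log n.factorial ≤ n * Real.log n - n + 1 + Real.log (n + 1) := by
  have hstrong : Real.log n.factorial ≤ (n + 1) * Real.log (n + 1) - n := by
    induction n with
    | zero => simp
    | succ n ih =>
      have := one_le_mul_log_add_one_sub_log (show (0 : ℝ) < n + 1 by positivity)
      rw [Nat.factorial_succ]
      push_cast
      rw [Real.log_mul (by positivity) (by positivity)]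
      linarith
  linarith [mul_log_add_one_sub_log_le (Nat.cast_nonneg (α := ℝ) n)]

theorem two_mul_log_perfectMatchingCount_le {n : ℕ} (hn : Even n) :
    2 * Real.log (perfectMatchingCount n) ≤ Real.log n.factorial := by
  have hpos := perfectMatchingCount_pos hn
  rw [← Nat.cast_two, ← Real.log_pow]
  exact Real.log_le_log (by positivity) (mod_cast perfectMatchingCount_sq_le n)

theorem log_factorial_le_perfectMatchingCount {n : ℕ} (hn : Even n) :
    Real.log n.factorial ≤ Real.log (n + 1) + 2 * Real.log (perfectMatchingCount n) := by
  have hpos := perfectMatchingCount_pos hn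
  rw [← Nat.cast_two, ← Real.log_pow, ← Real.log_mul (by positivity) (by positivity)]
  exact Real.log_le_log (by positivity) (mod_cast factorial_le_perfectMatchingCount_sq hn)

theorem mul_negMulLog_div {y : ℝ} (hy : 0 < y) (x : ℝ) :
    y * Real.negMulLog (x / y) = x * Real.log y - x * Real.log x := by
  rcases eq_or_ne x 0 with rfl | hx
  · simp
  · rw [Real.negMulLog, Real.log_div hx hy.ne']
    field_simp
    ring

section LevelWeight

variable {N j : ℕ} {J h : ℝ}

/-- The factor, common to all levels, by which `levelWeight` exceeds `exp (N * freeEnergy)` on the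
logarithmic scale. -/
noncomputable def logScale (N : ℕ) : ℝ := Real.log N.factorial - N / 2 * Real.log N + N

theorem levelWeight_nonneg : 0 ≤ levelWeight N J h j :=
  mul_nonneg (Nat.cast_nonneg _) (spinWeight_nonneg _)

theorem levelWeight_pos (hj : j ≤ N) (hpar : Even (N - j)) : 0 < levelWeight N J h j :=
  mul_pos (mod_cast Nat.choose_pos hj) (spinWeight_pos hpar)

theorem log_levelWeight (hN : 1 ≤ N) (hj : j ≤ N) (hpar : Even (N - j)) :
    Real.log (levelWeight N J h j) = logScale N + N * freeEnergy J h (j / N)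
      - (Real.log j.factorial - (j * Real.log j - j))
      - (Real.log (N - j).factorial - ((N - j : ℕ) * Real.log (N - j : ℕ) - (N - j : ℕ))) / 2
      - (Real.log (N - j).factorial - 2 * Real.log (perfectMatchingCount (N - j))) / 2 := by
  have hN0 : (0 : ℝ) < N := by exact_mod_cast hN
  have hcount := perfectMatchingCount_pos hpar
  have hchoose : Real.log (N.choose j) =
      Real.log N.factorial - Real.log j.factorial - Real.log (N - j).factorial := by
    rw [Nat.cast_choose ℝ hj, Real.log_div (by positivity) (by positivity),
      Real.log_mul (by positivity) (by positivity), sub_sub]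
  have hj_entropy := mul_negMulLog_div hN0 (j : ℝ)
  have hcompl_entropy := mul_negMulLog_div hN0 ((N - j : ℕ) : ℝ)
  have hcompl : ((N - j : ℕ) : ℝ) / N = 1 - (j : ℝ) / N := by
    rw [Nat.cast_sub hj]; field_simp
  have hcancel : (N : ℝ) * ((j : ℝ) / N) = j := by field_simp
  rw [hcompl] at hcompl_entropy
  rw [levelWeight, Real.log_mul (mod_cast (Nat.choose_pos hj).ne') (spinWeight_pos hpar).ne',
    spinWeight, Real.log_mul (by positivity) (Real.exp_pos _).ne', Real.log_exp, hchoose,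
    freeEnergy, logScale, bIMD]
  rw [Nat.cast_sub hj] at hcompl_entropy ⊢
  linear_combination (-1 : ℝ) * hj_entropy - (1 / 2) * hcompl_entropy +
    (Real.log N / 2 - 1 / 2) * hcancel

theorem levelWeight_le_exp (hN : 1 ≤ N) (hj : j ≤ N) :
    levelWeight N J h j ≤ Real.exp (logScale N + N * freeEnergy J h (j / N)) := by
  rcases Nat.even_or_odd (N - j) with hpar | hpar
  · rw [← Real.log_le_iff_le_exp (levelWeight_pos hj hpar), log_levelWeight hN hj hpar]
    linarith [le_log_factorial j, le_log_factorial (N - j),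
      two_mul_log_perfectMatchingCount_le hpar]
  · rw [levelWeight, spinWeight_of_odd hpar, mul_zero]
    positivity

theorem exp_le_levelWeight_mul (hN : 1 ≤ N) (hj : j ≤ N) (hpar : Even (N - j)) :
    Real.exp (logScale N + N * freeEnergy J h (j / N)) ≤
      levelWeight N J h j * (Real.exp 2 * ((N : ℝ) + 1) ^ 2) := by
  have hpos : 0 < levelWeight N J h j := levelWeight_pos hj hpar
  rw [← Real.le_log_iff_exp_le (by positivity), Real.log_mul hpos.ne' (by positivity),
    Real.log_mul (by positivity) (by positivity), Real.log_exp, Real.log_pow,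
    log_levelWeight hN hj hpar]
  have hlog_j : Real.log ((j : ℝ) + 1) ≤ Real.log ((N : ℝ) + 1) := by gcongr
  have hlog_compl : Real.log ((N - j : ℕ) + 1) ≤ Real.log ((N : ℝ) + 1) := by gcongr; omega
  push_cast
  linarith [log_factorial_le j, log_factorial_le (N - j),
    log_factorial_le_perfectMatchingCount hpar]

end LevelWeight

theorem exists_even_sub_abs_sub_le {N : ℕ} {x : ℝ} (hx : x ∈ Set.Icc (0 : ℝ) N) :
    ∃ j ≤ N, Even (N - j) ∧ |(j : ℝ) - x| ≤ 1 := by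
  have hfloor := Nat.floor_le hx.1
  have hfloor' := Nat.lt_floor_add_one x
  have hle : ⌊x⌋₊ ≤ N := Nat.floor_le_of_le hx.2
  rcases Nat.even_or_odd (N - ⌊x⌋₊) with hp | ⟨q, hq⟩
  · exact ⟨⌊x⌋₊, hle, hp, abs_le.2 ⟨by linarith, by linarith⟩⟩
  · refine ⟨⌊x⌋₊ + 1, by omega, ⟨q, by omega⟩, ?_⟩
    push_cast
    exact abs_le.2 ⟨by linarith, by linarith⟩

theorem exists_pos_forall_diff_le_sub {X : Type*} [TopologicalSpace X] {s U : Set X} {f : X → ℝ}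
    {x₀ : X} (hs : IsCompact s) (hf : ContinuousOn f s) (hmax : ∀ x ∈ s, x ≠ x₀ → f x < f x₀)
    (hU : U ∈ nhds x₀) : ∃ η > 0, ∀ x ∈ s \ U, f x ≤ f x₀ - η := by
  have hsub : s \ U ⊆ s \ interior U := Set.sdiff_subset_sdiff_right interior_subset
  rcases (s \ interior U).eq_empty_or_nonempty with hempty | hne
  · exact ⟨1, one_pos, fun x hx => absurd (hsub hx) (hempty ▸ Set.notMem_empty x)⟩
  obtain ⟨y, hy, hymax⟩ := (hs.diff isOpen_interior).exists_isMaxOn hne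
    (hf.mono Set.sdiff_subset)
  have hyx₀ : y ≠ x₀ := fun h => hy.2 (h ▸ mem_interior_iff_mem_nhds.2 hU)
  refine ⟨f x₀ - f y, sub_pos.2 (hmax y hy.1 hyx₀), fun x hx => ?_⟩
  have hxy : f x ≤ f y := hymax (hsub hx)
  linarith

theorem exists_add_one_pow_mul_exp_neg_le (k : ℕ) {c : ℝ} (hc : 0 < c) :
    ∃ C : ℝ, ∀ N : ℕ, 1 ≤ N → ((N : ℝ) + 1) ^ k * Real.exp (-(c * N)) ≤ C / N := by
  refine ⟨(k + 1).factorial * Real.exp c / c ^ (k + 1), fun N hN => ?_⟩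
  have : (0 : ℝ) < N := by exact_mod_cast hN
  have hpow := Real.pow_div_factorial_le_exp (c * (N + 1)) (by positivity) (k + 1)
  rw [div_le_iff₀ (by positivity), mul_add, Real.exp_add, mul_one, ← mul_add_one, mul_pow] at hpow
  rw [Real.exp_neg, div_div, ← div_eq_mul_inv, div_le_div_iff₀ (by positivity) (by positivity)]
  calc ((N : ℝ) + 1) ^ k * (c ^ (k + 1) * N)
      ≤ c ^ (k + 1) * ((N : ℝ) + 1) ^ (k + 1) := by
        rw [pow_succ ((N : ℝ) + 1)]
        nlinarith [show 0 < c ^ (k + 1) * ((N : ℝ) + 1) ^ k by positivity]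
    _ ≤ _ := by linarith

section Concentration

variable {J h m₀ : ℝ}

theorem sum_wConf_mul_indicator_le {N : ℕ} (hN : 1 ≤ N) {s : Set ℝ} {a : ℝ}
    (ha : ∀ m ∈ Set.Icc (0 : ℝ) 1 ∩ s, freeEnergy J h m ≤ a) :
    ∑ σ : Config N, wConf N J h σ * s.indicator 1 (mConf σ) ≤
      (N + 1) * Real.exp (logScale N + N * a) := by
  unfold mConf
  rw [sum_wConf_mul fun j => s.indicator 1 ((j : ℝ) / N)]
  have hlevel : ∀ j ∈ Finset.range (N + 1),
      levelWeight N J h j * s.indicator 1 ((j : ℝ) / N) ≤ Real.exp (logScale N + N * a) := by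
    intro j hj
    have hjN : j ≤ N := Finset.mem_range_succ_iff.1 hj
    by_cases hs : (j : ℝ) / N ∈ s
    · have hmem : (j : ℝ) / N ∈ Set.Icc (0 : ℝ) 1 :=
        ⟨by positivity, div_le_one_of_le₀ (mod_cast hjN) (Nat.cast_nonneg N)⟩
      rw [Set.indicator_of_mem hs, Pi.one_apply, mul_one]
      refine (levelWeight_le_exp hN hjN).trans ?_
      gcongr
      exact ha _ ⟨hmem, hs⟩
    · rw [Set.indicator_of_notMem hs, mul_zero]
      positivity
  simpa using Finset.sum_le_card_nsmul _ _ _ hlevel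

theorem eventually_exp_le_sum_wConf_mul (hm₀ : m₀ ∈ Set.Icc (0 : ℝ) 1) {a : ℝ}
    (ha : a < freeEnergy J h m₀) :
    ∀ᶠ N : ℕ in Filter.atTop, Real.exp (logScale N + N * a) ≤
      (∑ σ : Config N, wConf N J h σ) * (Real.exp 2 * ((N : ℝ) + 1) ^ 2) := by
  obtain ⟨ε, hε, hball⟩ := Metric.eventually_nhds_iff.1
    ((continuous_freeEnergy J h).continuousAt.eventually (lt_mem_nhds ha))
  filter_upwards [Filter.eventually_ge_atTop 1,
    tendsto_one_div_atTop_nhds_zero_nat.eventually (gt_mem_nhds hε)] with N hN hNε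
  have hN0 : (0 : ℝ) < N := by exact_mod_cast hN
  obtain ⟨j, hjN, hpar, hj⟩ := exists_even_sub_abs_sub_le (N := N) (x := N * m₀)
    ⟨mul_nonneg hN0.le hm₀.1, mul_le_of_le_one_right hN0.le hm₀.2⟩
  have hclose : dist ((j : ℝ) / N) m₀ < ε := by
    rw [Real.dist_eq, show (j : ℝ) / N - m₀ = (j - N * m₀) / N by field_simp, abs_div,
      abs_of_pos hN0]
    exact (div_le_div_of_nonneg_right hj hN0.le).trans_lt hNε
  calc Real.exp (logScale N + N * a)
      ≤ Real.exp (logScale N + N * freeEnergy J h (j / N)) := by gcongr; exact (hball hclose).le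
    _ ≤ levelWeight N J h j * (Real.exp 2 * ((N : ℝ) + 1) ^ 2) :=
        exp_le_levelWeight_mul hN hjN hpar
    _ ≤ (∑ i ∈ Finset.range (N + 1), levelWeight N J h i) * _ := by
        gcongr
        exact Finset.single_le_sum (f := levelWeight N J h) (fun i _ => levelWeight_nonneg)
          (Finset.mem_range_succ_iff.2 hjN)
    _ = _ := by
        congr 1
        simpa using (sum_wConf_mul (N := N) (J := J) (h := h) fun _ => 1).symm

theorem EConf_indicator_le {N : ℕ} (hN : 1 ≤ N) {s : Set ℝ} {a b : ℝ}
    (ha : ∀ m ∈ Set.Icc (0 : ℝ) 1 ∩ s, freeEnergy J h m ≤ a)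
    (hb : Real.exp (logScale N + N * b) ≤
      (∑ σ : Config N, wConf N J h σ) * (Real.exp 2 * ((N : ℝ) + 1) ^ 2)) :
    EConf N J h (fun σ => s.indicator 1 (mConf σ)) ≤
      Real.exp 2 * (((N : ℝ) + 1) ^ 3 * Real.exp (-((b - a) * N))) := by
  rw [EConf, div_le_iff₀ sum_wConf_pos]
  calc ∑ σ : Config N, wConf N J h σ * s.indicator 1 (mConf σ)
      ≤ (N + 1) * Real.exp (logScale N + N * a) := sum_wConf_mul_indicator_le hN ha
    _ = (N + 1) * Real.exp (-((b - a) * N)) * Real.exp (logScale N + N * b) := by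
        rw [mul_assoc, ← Real.exp_add]; ring_nf
    _ ≤ (N + 1) * Real.exp (-((b - a) * N)) *
          ((∑ σ : Config N, wConf N J h σ) * (Real.exp 2 * ((N : ℝ) + 1) ^ 2)) := by gcongr
    _ = _ := by ring

theorem exists_EConf_indicator_compl_le (hm₀ : m₀ ∈ Set.Icc (0 : ℝ) 1)
    (hmax : ∀ m ∈ Set.Icc (0 : ℝ) 1, m ≠ m₀ → freeEnergy J h m < freeEnergy J h m₀)
    {U : Set ℝ} (hU : U ∈ nhds m₀) :
    ∃ C : ℝ, ∀ N : ℕ, 1 ≤ N → EConf N J h (fun σ => Uᶜ.indicator 1 (mConf σ)) ≤ C / N := by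
  obtain ⟨η, hη, hgap⟩ := exists_pos_forall_diff_le_sub isCompact_Icc
    (continuous_freeEnergy J h).continuousOn hmax hU
  obtain ⟨B, hB⟩ := exists_add_one_pow_mul_exp_neg_le 3 (half_pos hη)
  have hnonneg : ∀ N : ℕ, 0 ≤ EConf N J h (fun σ => Uᶜ.indicator 1 (mConf σ)) := fun N =>
    (EConf_const 0).symm.trans_le
      (EConf_mono fun σ _ => Set.indicator_nonneg (fun _ _ => zero_le_one) _)
  have hbigO : (fun N : ℕ => EConf N J h (fun σ => Uᶜ.indicator 1 (mConf σ)))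
      =O[Filter.atTop] fun N : ℕ => (N : ℝ)⁻¹ := by
    refine Asymptotics.IsBigO.of_bound (Real.exp 2 * B) ?_
    filter_upwards [Filter.eventually_ge_atTop 1,
      eventually_exp_le_sum_wConf_mul hm₀ (sub_lt_self (freeEnergy J h m₀) (half_pos hη))]
      with N hN hZ
    rw [Real.norm_of_nonneg (hnonneg N), Real.norm_of_nonneg (by positivity), mul_assoc,
      ← div_eq_mul_inv]
    refine (EConf_indicator_le hN hgap hZ).trans ?_
    rw [sub_sub_sub_cancel_left, sub_half]
    gcongr
    exact hB N hN
  obtain ⟨C, -, hC⟩ := Asymptotics.bound_of_isBigO_nat_atTop hbigO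
  refine ⟨C, fun N hN => ?_⟩
  have hinv : (N : ℝ)⁻¹ ≠ 0 := inv_ne_zero (by exact_mod_cast (by omega : N ≠ 0))
  simpa [abs_of_nonneg (hnonneg N), div_eq_mul_inv] using hC hinv

end Concentration

/-! ### Moments of the magnetization -/

section Moments

variable {J h m₀ : ℝ}

/-- The factor of `Lone` which carries its zeros in `[0, 1)`; it is also the factor whose mean
against a smooth function of the magnetization is controlled by `EConf_balance`. -/
noncomputable def drift (J h m : ℝ) : ℝ := m ^ 2 - (1 - m) * Real.exp (2 * tauFun J h m)

theorem Lone_eq_drift_mul (m : ℝ) :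
    Lone J h m = drift J h m * (2 * (1 - m) / ((1 - m) + Real.exp (2 * tauFun J h m))) := by
  unfold Lone drift
  ring

theorem one_sub_add_exp_pos {m : ℝ} (hm : m ≤ 1) (x : ℝ) : 0 < 1 - m + Real.exp x :=
  add_pos_of_nonneg_of_pos (sub_nonneg.2 hm) (Real.exp_pos x)

theorem contDiffOn_Lone {n : WithTop ℕ∞} : ContDiffOn ℝ n (Lone J h) (Set.Iic 1) := by
  unfold Lone tauFun
  exact ContDiffOn.div (by fun_prop) (by fun_prop) fun m hm => (one_sub_add_exp_pos hm _).ne'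

theorem exists_lipschitzOnWith_of_contDiffOn {E F : Type*} [NormedAddCommGroup E]
    [NormedSpace ℝ E] [NormedAddCommGroup F] [NormedSpace ℝ F] {f : E → F} {s : Set E}
    (hconvex : Convex ℝ s) (hcompact : IsCompact s) (hf : ContDiffOn ℝ 1 f s) :
    ∃ K, LipschitzOnWith K f s :=
  (hf.locallyLipschitzOn hconvex).exists_lipschitzOnWith_of_compact hcompact

theorem exists_EConf_drift_mul_le {φ : ℝ → ℝ} (hφ : ContDiffOn ℝ 1 φ (Set.Iic 1)) :
    ∃ K : ℝ, ∀ N : ℕ, 1 ≤ N →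
      EConf N J h (fun σ => drift J h (mConf σ) * φ (mConf σ)) ≤ K / N := by
  set Ψ : ℝ × ℝ → ℝ := fun p => p.1 * (p.1 - p.2) * φ (p.1 - 2 * p.2) +
    -1 * ((1 - p.1) * Real.exp (2 * tauFun J h p.1 + 4 * J * p.2) * φ p.1) with hΨ
  have hΨ_smooth : ContDiffOn ℝ 1 Ψ (Set.Icc 0 1 ×ˢ Set.Icc 0 1) := by
    have hφ₀ : ContDiffOn ℝ 1 (fun p : ℝ × ℝ => φ p.1) (Set.Icc 0 1 ×ˢ Set.Icc 0 1) :=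
      hφ.comp (by fun_prop) fun p hp => hp.1.2
    have hφ₂ : ContDiffOn ℝ 1 (fun p : ℝ × ℝ => φ (p.1 - 2 * p.2)) (Set.Icc 0 1 ×ˢ Set.Icc 0 1) :=
      hφ.comp (by fun_prop) fun p hp => by
        have := hp.1.2; have := hp.2.1
        simp only [Set.mem_Iic]; linarith
    simp only [hΨ, tauFun]
    exact (ContDiffOn.mul (by fun_prop) hφ₂).add
      (contDiffOn_const.mul (ContDiffOn.mul (by fun_prop) hφ₀))
  obtain ⟨K, hK⟩ := exists_lipschitzOnWith_of_contDiffOn ((convex_Icc 0 1).prod (convex_Icc 0 1))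
    (isCompact_Icc.prod isCompact_Icc) hΨ_smooth
  refine ⟨K, fun N hN => ?_⟩
  have hε : (1 / N : ℝ) ∈ Set.Icc (0 : ℝ) 1 :=
    ⟨by positivity, div_le_one_of_le₀ (mod_cast hN) (Nat.cast_nonneg N)⟩
  calc EConf N J h (fun σ => drift J h (mConf σ) * φ (mConf σ))
      ≤ EConf N J h (fun σ => Ψ (mConf σ, 1 / N) + K / N) := by
        refine EConf_mono fun σ _ => ?_
        have hlip := hK.dist_le_mul (mConf σ, 0) ⟨mConf_mem_Icc σ, by simp⟩
          (mConf σ, 1 / N) ⟨mConf_mem_Icc σ, hε⟩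
        have hzero : Ψ (mConf σ, 0) = drift J h (mConf σ) * φ (mConf σ) := by
          simp only [hΨ, drift, mul_zero, sub_zero, add_zero]; ring
        rw [hzero, dist_prod_same_left, Real.dist_eq, dist_zero_left,
          Real.norm_of_nonneg hε.1, mul_one_div] at hlip
        linarith [(abs_le.1 hlip).2]
    _ = K / N := by
        simp only [hΨ]
        rw [EConf_add, EConf_add, EConf_const_mul, EConf_const, EConf_balance hN]
        ring

theorem exists_EConf_Lone_mul_sub_le :
    ∃ K : ℝ, ∀ N : ℕ, 1 ≤ N →
      EConf N J h (fun σ => Lone J h (mConf σ) * (mConf σ - m₀)) ≤ K / N := by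
  have hφ : ContDiffOn ℝ 1
      (fun m => 2 * (1 - m) / ((1 - m) + Real.exp (2 * tauFun J h m)) * (m - m₀)) (Set.Iic 1) := by
    unfold tauFun
    exact (ContDiffOn.div (by fun_prop) (by fun_prop)
      fun m hm => (one_sub_add_exp_pos hm _).ne').mul (by fun_prop)
  simpa only [Lone_eq_drift_mul, mul_assoc] using exists_EConf_drift_mul_le hφ

theorem exists_eventually_mul_pow_le_of_iteratedDeriv {f : ℝ → ℝ} {x₀ : ℝ} {n : ℕ} (hn : Odd n)
    (hf : ContDiffAt ℝ n f x₀) (hzero : ∀ l < n, iteratedDeriv l f x₀ = 0)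
    (hpos : 0 < iteratedDeriv n f x₀) :
    ∃ c > 0, ∀ᶠ x in nhds x₀, c * (x - x₀) ^ (n + 1) ≤ f x * (x - x₀) := by
  obtain ⟨u, hu, hfu⟩ := hf.contDiffOn le_rfl (by simp)
  obtain ⟨r, hr, hru⟩ := Metric.mem_nhds_iff.1 hu
  have hx₀ : x₀ ∈ Metric.ball x₀ r := Metric.mem_ball_self hr
  have htaylor := taylor_isLittleO (convex_ball x₀ r) hx₀ (hfu.mono hru)
  set a := (n.factorial : ℝ)⁻¹ * iteratedDeriv n f x₀ with ha
  have ha0 : 0 < a := by positivity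
  have hpoly : ∀ x, taylorWithinEval f n (Metric.ball x₀ r) x₀ x = a * (x - x₀) ^ n := by
    intro x
    rw [taylor_within_apply, Finset.sum_range_succ, Finset.sum_eq_zero, zero_add,
      iteratedDerivWithin_of_isOpen Metric.isOpen_ball hx₀, smul_eq_mul, ha, mul_right_comm]
    intro l hl
    rw [iteratedDerivWithin_of_isOpen Metric.isOpen_ball hx₀, hzero l (Finset.mem_range.1 hl),
      smul_zero]
  rw [Metric.isOpen_ball.nhdsWithin_eq hx₀] at htaylor
  refine ⟨a / 2, half_pos ha0, ?_⟩
  filter_upwards [htaylor.def (half_pos ha0)] with x hx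
  rw [hpoly, Real.norm_eq_abs, Real.norm_eq_abs] at hx
  have herror : |(f x - a * (x - x₀) ^ n) * (x - x₀)| ≤ a / 2 * (x - x₀) ^ (n + 1) := by
    calc |(f x - a * (x - x₀) ^ n) * (x - x₀)|
        ≤ a / 2 * |(x - x₀) ^ n| * |x - x₀| := by rw [abs_mul]; gcongr
      _ = a / 2 * (x - x₀) ^ (n + 1) := by
        rw [mul_assoc, ← abs_mul, ← pow_succ, abs_of_nonneg (hn.add_one.pow_nonneg _)]
  rw [sub_mul, mul_assoc a, ← pow_succ] at herror
  linarith [(abs_le.1 herror).1]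

theorem exists_EConf_pow_le_of_eventually {n : ℕ} (hm₀ : m₀ ∈ Set.Icc (0 : ℝ) 1)
    (hmax : ∀ m ∈ Set.Icc (0 : ℝ) 1, m ≠ m₀ → freeEnergy J h m < freeEnergy J h m₀)
    {c : ℝ} (hc : 0 < c) (hgrowth : ∀ᶠ m in nhds m₀, c * (m - m₀) ^ n ≤ Lone J h m * (m - m₀)) :
    ∃ C : ℝ, ∀ N : ℕ, 1 ≤ N → EConf N J h (fun σ => (mConf σ - m₀) ^ n) ≤ C / N := by
  obtain ⟨K, hK⟩ := exists_EConf_Lone_mul_sub_le (J := J) (h := h) (m₀ := m₀)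
  obtain ⟨P, hP⟩ := exists_EConf_indicator_compl_le hm₀ hmax hgrowth
  have hcont : ContinuousOn (fun m => c * (m - m₀) ^ n - Lone J h m * (m - m₀))
      (Set.Icc 0 1) := by
    have := (contDiffOn_Lone (J := J) (h := h) (n := 0)).continuousOn.mono
      (Set.Icc_subset_Iic_self (a := 0))
    fun_prop
  obtain ⟨A, hA⟩ := isCompact_Icc.exists_bound_of_continuousOn hcont
  have hA0 : 0 ≤ A := (norm_nonneg _).trans (hA m₀ hm₀)
  refine ⟨c⁻¹ * (K + A * P), fun N hN => ?_⟩
  have hglobal : c * EConf N J h (fun σ => (mConf σ - m₀) ^ n) ≤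
      EConf N J h (fun σ => Lone J h (mConf σ) * (mConf σ - m₀)) + A * EConf N J h fun σ =>
        {m | c * (m - m₀) ^ n ≤ Lone J h m * (m - m₀)}ᶜ.indicator 1 (mConf σ) := by
    rw [← EConf_const_mul, ← EConf_const_mul, ← EConf_add]
    refine EConf_mono fun σ _ => ?_
    by_cases hσ : c * (mConf σ - m₀) ^ n ≤ Lone J h (mConf σ) * (mConf σ - m₀)
    · rw [Set.indicator_of_notMem (not_not.2 hσ), mul_zero, add_zero]
      exact hσ
    · rw [Set.indicator_of_mem hσ, Pi.one_apply, mul_one]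
      linarith [(abs_le.1 (hA _ (mConf_mem_Icc σ))).2]
  have hsum : c * EConf N J h (fun σ => (mConf σ - m₀) ^ n) ≤ K / N + A * (P / N) :=
    hglobal.trans (add_le_add (hK N hN) (mul_le_mul_of_nonneg_left (hP N hN) hA0))
  rw [mul_div_assoc, ← div_eq_inv_mul, le_div_iff₀' hc, add_div, mul_div_assoc]
  exact hsum

theorem le_one_add_pow {x : ℝ} (hx : 0 ≤ x) {n : ℕ} (hn : n ≠ 0) : x ≤ 1 + x ^ n := by
  rcases le_total x 1 with hx1 | hx1
  · linarith [pow_nonneg hx n]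
  · linarith [le_self_pow₀ hx1 hn]

theorem EConf_abs_le_of_pow {N n : ℕ} (hN : 1 ≤ N) (hn : Even n) (hn0 : n ≠ 0) {C : ℝ}
    (hC : EConf N J h (fun σ => (mConf σ - m₀) ^ n) ≤ C / N) :
    EConf N J h (fun σ => |mConf σ - m₀|) ≤ (1 + C) * (N : ℝ) ^ (-(1 : ℝ) / n) := by
  have hN0 : (0 : ℝ) < N := by exact_mod_cast hN
  set r := (N : ℝ) ^ (-(1 : ℝ) / n)
  have hr0 : 0 < r := Real.rpow_pos_of_pos hN0 _
  have hr : r ^ n = (N : ℝ)⁻¹ := by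
    rw [← Real.rpow_mul_natCast hN0.le, div_mul_cancel₀ _ (mod_cast hn0), Real.rpow_neg_one]
  have hscale : ∀ x : ℝ, |x| ≤ r + r * N * x ^ n := by
    intro x
    have := mul_le_mul_of_nonneg_left (le_one_add_pow (div_nonneg (abs_nonneg x) hr0.le) hn0) hr0.le
    rwa [div_pow, hn.pow_abs, hr, mul_div_cancel₀ _ hr0.ne', mul_add, mul_one, div_inv_eq_mul,
      mul_comm (x ^ n), ← mul_assoc] at this
  calc EConf N J h (fun σ => |mConf σ - m₀|)
      ≤ EConf N J h (fun σ => r + r * N * (mConf σ - m₀) ^ n) := EConf_mono fun σ _ => hscale _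
    _ = r + r * N * EConf N J h (fun σ => (mConf σ - m₀) ^ n) := by
        rw [EConf_add, EConf_const, EConf_const_mul]
    _ ≤ r + r * N * (C / N) := by gcongr
    _ = (1 + C) * r := by field_simp

theorem exists_EConf_abs_sub_le {k : ℕ} (hm₀ : m₀ ∈ Set.Icc (0 : ℝ) 1) (hlt : m₀ < 1)
    (hmax : ∀ m ∈ Set.Icc (0 : ℝ) 1, m ≠ m₀ → freeEnergy J h m < freeEnergy J h m₀)
    (hzero : ∀ l ≤ 2 * k, iteratedDeriv l (Lone J h) m₀ = 0)
    (hpos : 0 < iteratedDeriv (2 * k + 1) (Lone J h) m₀) :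
    ∃ C : ℝ, ∀ N : ℕ, 1 ≤ N → EConf N J h (fun σ => |mConf σ - m₀|) ≤
      C * (N : ℝ) ^ (-(1 : ℝ) / (2 * k + 2)) := by
  obtain ⟨c, hc, hgrowth⟩ := exists_eventually_mul_pow_le_of_iteratedDeriv
    (odd_two_mul_add_one k) (contDiffOn_Lone.contDiffAt (Iic_mem_nhds hlt))
    (fun l hl => hzero l (Nat.lt_succ_iff.1 hl)) hpos
  obtain ⟨C, hC⟩ := exists_EConf_pow_le_of_eventually hm₀ hmax hc hgrowth
  refine ⟨1 + C, fun N hN => ?_⟩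
  have := EConf_abs_le_of_pow hN (by simp [parity_simps]) (by omega) (hC N hN)
  push_cast at this
  rwa [add_assoc, one_add_one_eq_two] at this

end Moments

/-! ### The conditional second moment of the increment -/

section Increment

variable {N : ℕ} {J h : ℝ}

theorem card_filter_cEdges (S : Finset (Fin N)) :
    #{p ∈ cEdges N | p.1 ∈ S ∧ p.2 ∈ S} = (#S).choose 2 := by
  have hpairs : {p ∈ cEdges N | p.1 ∈ S ∧ p.2 ∈ S} = {p ∈ S.offDiag | p.1 < p.2} := by
    ext p
    simp only [cEdges, Finset.mem_filter, Finset.mem_univ, true_and, Finset.mem_offDiag]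
    exact ⟨fun ⟨hlt, hu, hv⟩ => ⟨⟨hu, hv, hlt.ne⟩, hlt⟩, fun ⟨⟨hu, hv, _⟩, hlt⟩ => ⟨hlt, hu, hv⟩⟩
  rw [hpairs, ← Sym2.card_image_offDiag, ← Sym2.filter_image_mk_not_isDiag,
    ← Finset.sym2_eq_image, Finset.card_eq_sum_ones, Finset.card_eq_sum_ones,
    Finset.sum_sym2_filter_not_isDiag]

theorem card_cEdges : #(cEdges N) = N.choose 2 := by
  simpa using card_filter_cEdges (Finset.univ : Finset (Fin N))

theorem Msum_upd_add (σ : Config N) {u v : Fin N} (huv : u ≠ v) (s t : Bool) :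
    Msum (upd σ u v s t) + (σ u).toNat + (σ v).toNat = Msum σ + s.toNat + t.toNat := by
  have hsum : ∀ ρ : Config N, Msum ρ =
      (∑ i ∈ {u, v}ᶜ, (ρ i).toNat) + ((ρ u).toNat + (ρ v).toNat) := by
    intro ρ
    rw [← Finset.sum_pair (f := fun i => (ρ i).toNat) huv, Finset.sum_compl_add_sum, Msum, ASet,
      Finset.card_filter]
    refine Finset.sum_congr rfl fun i _ => ?_
    cases ρ i <;> rfl
  have hrest : ∑ i ∈ ({u, v} : Finset (Fin N))ᶜ, (upd σ u v s t i).toNat =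
      ∑ i ∈ {u, v}ᶜ, (σ i).toNat := by
    refine Finset.sum_congr rfl fun i hi => ?_
    simp only [Finset.mem_compl, Finset.mem_insert, Finset.mem_singleton, not_or] at hi
    rw [upd, if_neg hi.1, if_neg hi.2]
  rw [hsum (upd σ u v s t), hsum σ, hrest]
  simp only [upd, if_true, if_neg huv.symm]
  ring

/-- The probability that a resampled pair of spins comes out up-up rather than down-down, when the
other spins have magnetization `b` and `ε = 1 / N`. -/
noncomputable def pairUpProb (J h b ε : ℝ) : ℝ :=
  Real.exp (2 * tauFun J h b + 4 * J * ε) / (1 - (b + ε) + Real.exp (2 * tauFun J h b + 4 * J * ε))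

theorem spinWeight_div_add_spinWeight {j : ℕ} (hj : j + 2 ≤ N) (hparity : Even (N - j)) :
    spinWeight N J h (j + 2) / (spinWeight N J h j + spinWeight N J h (j + 2)) =
      pairUpProb J h (j / N) (1 / N) := by
  have hN : (0 : ℝ) < N := by exact_mod_cast (by omega : 0 < N)
  have hle : (j / N + 1 / N : ℝ) ≤ 1 := by
    rw [← add_div]
    exact div_le_one_of_le₀ (by exact_mod_cast (by omega : j + 1 ≤ N)) hN.le
  have hstep := spinWeight_add_two (J := J) (h := h) hj
  rw [show (N : ℝ) - j - 1 = N * (1 - (j / N + 1 / N)) by field_simp; ring, mul_left_comm,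
    mul_left_comm _ (N : ℝ), mul_right_inj' hN.ne'] at hstep
  rw [pairUpProb, div_eq_div_iff
    (add_pos_of_pos_of_nonneg (spinWeight_pos hparity) (spinWeight_nonneg _)).ne'
    (one_sub_add_exp_pos hle _).ne']
  linear_combination hstep

/-- The mean squared increment of the number of up spins when the pair `u, v` is resampled. -/
noncomputable def edgeSecondMoment (N : ℕ) (J h : ℝ) (σ : Config N) (u v : Fin N) : ℝ :=
  ∑ st : Bool × Bool, qCond N J h σ u v st.1 st.2 *
    ((Msum σ : ℝ) - Msum (upd σ u v st.1 st.2)) ^ 2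

theorem edgeSecondMoment_eq {σ : Config N} {u v : Fin N} {B : ℕ}
    (hB : ∀ s t, Msum (upd σ u v s t) = B + s.toNat + t.toNat) :
    edgeSecondMoment N J h σ u v =
      (spinWeight N J h B * (Msum σ - B) ^ 2 +
        2 * spinWeight N J h (B + 1) * (Msum σ - (B + 1)) ^ 2 +
        spinWeight N J h (B + 2) * (Msum σ - (B + 2)) ^ 2) /
      (spinWeight N J h B + 2 * spinWeight N J h (B + 1) + spinWeight N J h (B + 2)) := by
  simp only [edgeSecondMoment, qCond, wConf_eq, hB, Fintype.sum_prod_type, Fintype.sum_bool,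
    Bool.toNat_true, Bool.toNat_false, add_zero, add_assoc B 1 1, one_add_one_eq_two]
  push_cast
  ring

theorem edgeSecondMoment_of_wConf_ne_zero {σ : Config N} (hσ : wConf N J h σ ≠ 0) {u v : Fin N}
    (huv : u ≠ v) :
    edgeSecondMoment N J h σ u v =
      (if u ∈ ASet σ ∧ v ∈ ASet σ then
        4 * (1 - pairUpProb J h (mConf σ - 2 * (1 / N)) (1 / N)) else 0) +
      if u ∈ (ASet σ)ᶜ ∧ v ∈ (ASet σ)ᶜ then 4 * pairUpProb J h (mConf σ) (1 / N) else 0 := by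
  obtain ⟨B, hB⟩ : ∃ B, Msum σ = B + (σ u).toNat + (σ v).toNat :=
    ⟨Msum (upd σ u v false false), (Msum_upd_add σ huv false false).symm⟩
  have hupd : ∀ s t, Msum (upd σ u v s t) = B + s.toNat + t.toNat := fun s t => by
    have := Msum_upd_add σ huv s t
    omega
  have hle : B + 2 ≤ N := hupd true true ▸ Msum_le _
  have hparity := even_sub_Msum_of_wConf_ne_zero hσ
  rw [edgeSecondMoment_eq hupd, mConf]
  simp only [Finset.mem_compl, ASet, Finset.mem_filter, Finset.mem_univ, true_and]
  rcases hu : σ u <;> rcases hv : σ v <;>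
    simp only [hu, hv, Bool.toNat_true, Bool.toNat_false, add_zero] at hB <;> rw [hB] at hparity ⊢
  case true.true =>
    have hodd : spinWeight N J h (B + 1) = 0 := spinWeight_of_odd (by grind)
    have hpos : 0 < spinWeight N J h (B + 2) := spinWeight_pos hparity
    have hnonneg : 0 ≤ spinWeight N J h B := spinWeight_nonneg B
    rw [show ((B + 1 + 1 : ℕ) / N - 2 * (1 / N) : ℝ) = B / N by push_cast; ring,
      ← spinWeight_div_add_spinWeight hle (by grind), hodd]
    simp only [Nat.cast_add, Nat.cast_one, mul_zero, add_sub_cancel_left, one_pow, mul_one,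
      add_zero, and_self, ↓reduceIte, not_true_eq_false]
    field_simp
    ring
  case false.false =>
    have hodd : spinWeight N J h (B + 1) = 0 := spinWeight_of_odd (by grind)
    rw [← spinWeight_div_add_spinWeight hle (by grind), hodd]
    simp only [sub_self, ne_eq, OfNat.ofNat_ne_zero, not_false_eq_true, zero_pow, mul_zero,
      sub_add_cancel_left, even_two, Even.neg_pow, one_pow, mul_one, add_zero, zero_add,
      Bool.false_eq_true, and_self, ↓reduceIte]
    ring
  all_goals
    have h₀ : spinWeight N J h B = 0 := spinWeight_of_odd (by grind)
    have h₂ : spinWeight N J h (B + 2) = 0 := spinWeight_of_odd (by grind)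
    simp [h₀, h₂]

/-- The rate at which resampling a uniform edge turns an up-up pair into a down-down one, at
magnetization `m` and with `ε = 1 / N`. -/
noncomputable def pairDownRate (J h m ε : ℝ) : ℝ :=
  m * (m - ε) / (1 - ε) * (1 - pairUpProb J h (m - 2 * ε) ε)

/-- The rate at which resampling a uniform edge turns a down-down pair into an up-up one, at
magnetization `m` and with `ε = 1 / N`. -/
noncomputable def pairUpRate (J h m ε : ℝ) : ℝ :=
  (1 - m) * (1 - (m + ε)) / (1 - ε) * pairUpProb J h m ε

/-- The mean squared increment of the number of up spins under one step of the dynamics. -/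
noncomputable def incrementSq (N : ℕ) (J h : ℝ) (σ : Config N) : ℝ :=
  condE2 N J h (fun σ σ' => ((Msum σ : ℝ) - Msum σ') ^ 2) σ

theorem incrementSq_eq (hN : 2 ≤ N) {σ : Config N} (hσ : wConf N J h σ ≠ 0) :
    incrementSq N J h σ =
      4 * pairDownRate J h (mConf σ) (1 / N) + 4 * pairUpRate J h (mConf σ) (1 / N) := by
  have hedges : incrementSq N J h σ = ((cEdges N).card : ℝ)⁻¹ *
      ∑ p ∈ cEdges N, edgeSecondMoment N J h σ p.1 p.2 := rfl
  have hcompl : (#(ASet σ)ᶜ : ℝ) = N - Msum σ := by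
    rw [Finset.card_compl, Fintype.card_fin, ← Nat.cast_sub (Msum_le σ), Msum]
  have hN2 : (2 : ℝ) ≤ N := by exact_mod_cast hN
  have hN1 : (N : ℝ) - 1 ≠ 0 := by linarith
  rw [hedges, Finset.sum_congr rfl fun p hp =>
      edgeSecondMoment_of_wConf_ne_zero hσ (Finset.mem_filter.1 hp).2.ne,
    Finset.sum_add_distrib, ← Finset.sum_filter, ← Finset.sum_filter, Finset.sum_const,
    Finset.sum_const, card_filter_cEdges, card_filter_cEdges, card_cEdges, nsmul_eq_mul,
    nsmul_eq_mul, Nat.cast_choose_two, Nat.cast_choose_two, Nat.cast_choose_two, hcompl,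
    pairDownRate, pairUpRate]
  change _ * ((Msum σ : ℝ) * (Msum σ - 1) / 2 * _ + _) = _
  generalize pairUpProb J h (mConf σ - 2 * (1 / N)) (1 / N) = P
  generalize pairUpProb J h (mConf σ) (1 / N) = Q
  unfold mConf
  field_simp
  ring

theorem incrementSq_one (σ : Config 1) : incrementSq 1 J h σ = 0 := by
  simp [incrementSq, condE2, cEdges]

theorem pairRates_zero {m : ℝ} (hm : m ≤ 1) :
    4 * pairDownRate J h m 0 + 4 * pairUpRate J h m 0 = Ltwo J h m := by
  have := (one_sub_add_exp_pos hm (2 * tauFun J h m)).ne'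
  simp only [pairDownRate, pairUpRate, pairUpProb, Ltwo, mul_zero, sub_zero, add_zero]
  field_simp
  ring

theorem contDiffOn_pairUpProb {n : WithTop ℕ∞} :
    ContDiffOn ℝ n (fun p : ℝ × ℝ => pairUpProb J h p.1 p.2) {p | p.1 + p.2 ≤ 1} := by
  unfold pairUpProb tauFun
  exact ContDiffOn.div (by fun_prop) (by fun_prop) fun p hp => (one_sub_add_exp_pos hp _).ne'

theorem exists_pairDownRate_lipschitz :
    ∃ K, LipschitzOnWith K (fun p : ℝ × ℝ => pairDownRate J h p.1 p.2)
      (Set.Icc 0 1 ×ˢ Set.Icc 0 (1 / 2)) := by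
  refine exists_lipschitzOnWith_of_contDiffOn ((convex_Icc _ _).prod (convex_Icc _ _))
    (isCompact_Icc.prod isCompact_Icc) (ContDiffOn.mul ?_ (contDiffOn_const.sub ?_))
  · refine ContDiffOn.div (by fun_prop) (by fun_prop) fun p hp => ?_
    have := hp.2.2
    linarith
  · refine contDiffOn_pairUpProb.comp (g := fun p : ℝ × ℝ => pairUpProb J h p.1 p.2)
      (f := fun p : ℝ × ℝ => (p.1 - 2 * p.2, p.2)) (by fun_prop) fun p hp => ?_
    have := hp.1.2
    have := hp.2.1
    simp only [Set.mem_ofPred_eq]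
    linarith

theorem exists_pairUpRate_lipschitz :
    ∃ K, LipschitzOnWith K (fun p : ℝ × ℝ => pairUpRate J h p.1 p.2)
      (Set.Icc 0 1 ×ˢ Set.Icc 0 (1 / 2) ∩ {p | p.1 + p.2 ≤ 1}) := by
  have hconvex : Convex ℝ {p : ℝ × ℝ | p.1 + p.2 ≤ 1} :=
    convex_halfSpace_le (IsLinearMap.mk (by intros; simp; ring) (by intros; simp; ring)) 1
  refine exists_lipschitzOnWith_of_contDiffOn
    (((convex_Icc _ _).prod (convex_Icc _ _)).inter hconvex)
    ((isCompact_Icc.prod isCompact_Icc).inter_right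
      (isClosed_le (by fun_prop) continuous_const))
    (ContDiffOn.mul ?_ (contDiffOn_pairUpProb.mono Set.inter_subset_right))
  refine ContDiffOn.div (by fun_prop) (by fun_prop) fun p hp => ?_
  have := hp.1.2.2
  linarith

theorem exists_abs_pairDownRate_sub_le {m₀ : ℝ} (hm₀ : m₀ ∈ Set.Icc (0 : ℝ) 1) :
    ∃ K : ℝ, 0 ≤ K ∧ ∀ m ∈ Set.Icc (0 : ℝ) 1, ∀ ε ∈ Set.Icc (0 : ℝ) (1 / 2),
      |pairDownRate J h m ε - pairDownRate J h m₀ 0| ≤ K * (|m - m₀| + ε) := by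
  obtain ⟨K, hK⟩ := exists_pairDownRate_lipschitz (J := J) (h := h)
  refine ⟨K, K.2, fun m hm ε hε => ?_⟩
  refine (hK.dist_le_mul (m, ε) ⟨hm, hε⟩ (m₀, 0) ⟨hm₀, by simp⟩).trans ?_
  gcongr
  rw [Prod.dist_eq, Real.dist_eq, Real.dist_0_eq_abs, abs_of_nonneg hε.1]
  exact max_le_add_of_nonneg (abs_nonneg _) hε.1

theorem exists_abs_pairUpRate_sub_le {m₀ : ℝ} (hm₀ : m₀ ∈ Set.Icc (0 : ℝ) 1) :
    ∃ K : ℝ, 0 ≤ K ∧ ∀ m ∈ Set.Icc (0 : ℝ) 1, ∀ ε ∈ Set.Icc (0 : ℝ) (1 / 2),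
      m + ε ≤ 1 ∨ m = 1 → |pairUpRate J h m ε - pairUpRate J h m₀ 0| ≤ K * (|m - m₀| + ε) := by
  obtain ⟨K, hK⟩ := exists_pairUpRate_lipschitz (J := J) (h := h)
  have htriangle : ∀ m ∈ Set.Icc (0 : ℝ) 1, ∀ ε ∈ Set.Icc (0 : ℝ) (1 / 2), m + ε ≤ 1 →
      |pairUpRate J h m ε - pairUpRate J h m₀ 0| ≤ K * (|m - m₀| + ε) := fun m hm ε hε hmε => by
    refine (hK.dist_le_mul (m, ε) ⟨⟨hm, hε⟩, hmε⟩ (m₀, 0) ⟨⟨hm₀, by simp⟩, ?_⟩).trans ?_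
    · simpa using hm₀.2
    gcongr
    rw [Prod.dist_eq, Real.dist_eq, Real.dist_0_eq_abs, abs_of_nonneg hε.1]
    exact max_le_add_of_nonneg (abs_nonneg _) hε.1
  refine ⟨K, K.2, fun m hm ε hε => Or.rec (htriangle m hm ε hε) ?_⟩
  rintro rfl
  have hvanish : pairUpRate J h 1 ε = pairUpRate J h 1 0 := by simp [pairUpRate]
  rw [hvanish]
  refine (htriangle 1 hm 0 (by simp) (by simp)).trans ?_
  have := hε.1
  gcongr

theorem exists_abs_incrementSq_sub_Ltwo_le {m₀ : ℝ} (hm₀ : m₀ ∈ Set.Icc (0 : ℝ) 1) :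
    ∃ K : ℝ, 0 ≤ K ∧ ∀ N : ℕ, 1 ≤ N → ∀ σ : Config N, wConf N J h σ ≠ 0 →
      |incrementSq N J h σ - Ltwo J h m₀| ≤ K * (|mConf σ - m₀| + 1 / N) := by
  obtain ⟨K₁, _, hdown⟩ := exists_abs_pairDownRate_sub_le (J := J) (h := h) hm₀
  obtain ⟨K₂, _, hup⟩ := exists_abs_pairUpRate_sub_le (J := J) (h := h) hm₀
  refine ⟨max |Ltwo J h m₀| (4 * K₁ + 4 * K₂), by positivity, fun N hN σ hσ => ?_⟩
  rcases hN.eq_or_lt with rfl | hN2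
  · rw [incrementSq_one, zero_sub, abs_neg, Nat.cast_one, one_div_one]
    exact (le_max_left _ _).trans (le_mul_of_one_le_right (by positivity) (by simp))
  have hN0 : (0 : ℝ) < N := by exact_mod_cast hN
  have hε : (1 / N : ℝ) ∈ Set.Icc (0 : ℝ) (1 / 2) :=
    ⟨by positivity, one_div_le_one_div_of_le two_pos (mod_cast hN2)⟩
  have hlast : mConf σ + 1 / N ≤ 1 ∨ mConf σ = 1 := by
    rcases (Msum_le σ).lt_or_eq with hlt | heq
    · left
      rw [mConf, ← add_div]
      exact div_le_one_of_le₀ (mod_cast hlt) hN0.le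
    · right
      rw [mConf, heq, div_self hN0.ne']
  have hdownσ := hdown _ (mConf_mem_Icc σ) _ hε
  have hupσ := hup _ (mConf_mem_Icc σ) _ hε hlast
  rw [incrementSq_eq hN2 hσ, ← pairRates_zero hm₀.2]
  calc _ = |4 * (pairDownRate J h (mConf σ) (1 / N) - pairDownRate J h m₀ 0) +
        4 * (pairUpRate J h (mConf σ) (1 / N) - pairUpRate J h m₀ 0)| := by ring_nf
    _ ≤ (4 * K₁ + 4 * K₂) * (|mConf σ - m₀| + 1 / N) := by
      refine (abs_add_le _ _).trans ?_
      rw [abs_mul, abs_mul, abs_of_pos four_pos]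
      linarith
    _ ≤ _ := mul_le_mul_of_nonneg_right (le_max_right _ _) (by positivity)

end Increment

/-! ### Stein's second moment bound -/

section SecondMoment

variable {J h m₀ : ℝ} {k : ℕ}

theorem deriv_Lone_one : deriv (Lone J h) 1 < 0 := by
  set ρ : ℝ → ℝ := fun m => 2 * (m ^ 2 - (1 - m) * Real.exp (2 * tauFun J h m)) /
    ((1 - m) + Real.exp (2 * tauFun J h m)) with hρ
  have hfactor : Lone J h = (fun m => 1 - m) * ρ := by
    funext m
    simp only [Lone, hρ, Pi.mul_apply]
    ring
  have hρ_diff : DifferentiableAt ℝ ρ 1 := by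
    unfold ρ tauFun
    exact DifferentiableAt.div (by fun_prop) (by fun_prop) (one_sub_add_exp_pos le_rfl _).ne'
  have hρ_pos : 0 < ρ 1 := by
    simp only [hρ, sub_self, zero_mul, zero_add, sub_zero]
    positivity
  rw [hfactor, (((hasDerivAt_id' (1 : ℝ)).const_sub 1).mul hρ_diff.hasDerivAt).deriv]
  simpa using hρ_pos

theorem lt_one_of_iteratedDeriv_Lone (hm₀ : m₀ ≤ 1)
    (hzero : ∀ l ≤ 2 * k, iteratedDeriv l (Lone J h) m₀ = 0)
    (hpos : 0 < iteratedDeriv (2 * k + 1) (Lone J h) m₀) : m₀ < 1 := by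
  refine hm₀.lt_of_ne ?_
  rintro rfl
  have hneg : iteratedDeriv 1 (Lone J h) 1 < 0 := by
    rw [iteratedDeriv_one]
    exact deriv_Lone_one
  rcases Nat.eq_zero_or_pos k with rfl | hk
  · exact lt_asymm hneg hpos
  · exact hneg.ne (hzero 1 (by omega))

theorem sq_eq_of_Lone_eq_zero (hm₀ : m₀ < 1) (hzero : Lone J h m₀ = 0) :
    m₀ ^ 2 = (1 - m₀) * Real.exp (2 * tauFun J h m₀) := by
  have hfactor : 0 < 2 * (1 - m₀) / ((1 - m₀) + Real.exp (2 * tauFun J h m₀)) :=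
    div_pos (by linarith) (one_sub_add_exp_pos hm₀.le _)
  rw [Lone_eq_drift_mul] at hzero
  exact sub_eq_zero.1 ((mul_eq_zero.1 hzero).resolve_right hfactor.ne')

theorem Ltwo_pos (hm₀ : m₀ < 1) : 0 < Ltwo J h m₀ := by
  have := sub_pos.2 hm₀
  unfold Ltwo
  positivity

theorem condE2_const_mul {N : ℕ} (c : ℝ) (F : Config N → Config N → ℝ) (σ : Config N) :
    condE2 N J h (fun σ σ' => c * F σ σ') σ = c * condE2 N J h F σ := by
  simp only [condE2, mul_left_comm _ c, ← Finset.mul_sum]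

theorem rpow_div_add_one_eq_sq {x : ℝ} (hx : 0 ≤ x) (a : ℝ) (k : ℕ) :
    x ^ (a / ((k : ℝ) + 1)) = (x ^ (a / (2 * (k : ℝ) + 2))) ^ 2 := by
  rw [← Real.rpow_mul_natCast hx]
  congr 1
  push_cast
  field_simp

theorem scaled_condE2_eq_incrementSq_div {N : ℕ} (hN : 1 ≤ N) (L : ℝ) (σ : Config N) :
    2 * (N : ℝ) ^ ((2 * (k : ℝ) + 1) / ((k : ℝ) + 1)) / L / 2 *
      condE2 N J h (fun σ σ' =>
        (((Msum σ : ℝ) - N * m₀) / (N : ℝ) ^ ((2 * (k : ℝ) + 1) / (2 * (k : ℝ) + 2)) -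
          ((Msum σ' : ℝ) - N * m₀) / (N : ℝ) ^ ((2 * (k : ℝ) + 1) / (2 * (k : ℝ) + 2))) ^ 2) σ =
      incrementSq N J h σ / L := by
  rw [rpow_div_add_one_eq_sq (Nat.cast_nonneg N)]
  set s := (N : ℝ) ^ ((2 * (k : ℝ) + 1) / (2 * (k : ℝ) + 2))
  have hs : s ≠ 0 := (Real.rpow_pos_of_pos (by exact_mod_cast hN) _).ne'
  have hscale : ∀ x y : ℝ, ((x - N * m₀) / s - (y - N * m₀) / s) ^ 2 = (s ^ 2)⁻¹ * (x - y) ^ 2 :=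
    fun x y => by field_simp; ring
  simp only [hscale, condE2_const_mul, incrementSq]
  field_simp

theorem exists_EConf_abs_one_sub_incrementSq_div_le (hm₀ : m₀ ∈ Set.Icc (0 : ℝ) 1) (hlt : m₀ < 1)
    (hmax : ∀ m ∈ Set.Icc (0 : ℝ) 1, m ≠ m₀ → freeEnergy J h m < freeEnergy J h m₀)
    (hzero : ∀ l ≤ 2 * k, iteratedDeriv l (Lone J h) m₀ = 0)
    (hpos : 0 < iteratedDeriv (2 * k + 1) (Lone J h) m₀) :
    ∃ K : ℝ, ∀ N : ℕ, 1 ≤ N →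
      EConf N J h (fun σ => |1 - incrementSq N J h σ / Ltwo J h m₀|) ≤
        K * ((N : ℝ) ^ (-(1 : ℝ) / (2 * (k : ℝ) + 2)) + (N : ℝ)⁻¹) := by
  obtain ⟨A, hA, hincrement⟩ := exists_abs_incrementSq_sub_Ltwo_le (J := J) (h := h) hm₀
  obtain ⟨C, hmoment⟩ := exists_EConf_abs_sub_le hm₀ hlt hmax hzero hpos
  have hL : 0 < Ltwo J h m₀ := Ltwo_pos hlt
  set L := Ltwo J h m₀
  refine ⟨A / L * max C 1, fun N hN => ?_⟩
  set r := (N : ℝ) ^ (-(1 : ℝ) / (2 * (k : ℝ) + 2))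
  have hpointwise : ∀ σ : Config N, wConf N J h σ ≠ 0 →
      |1 - incrementSq N J h σ / L| ≤ A / L * (|mConf σ - m₀| + 1 / N) := fun σ hσ => by
    rw [one_sub_div hL.ne', abs_div, abs_of_pos hL, abs_sub_comm, div_mul_eq_mul_div]
    exact div_le_div_of_nonneg_right (hincrement N hN σ hσ) hL.le
  calc EConf N J h (fun σ => |1 - incrementSq N J h σ / L|)
      ≤ EConf N J h (fun σ => A / L * (|mConf σ - m₀| + 1 / N)) := EConf_mono hpointwise
    _ = A / L * (EConf N J h (fun σ => |mConf σ - m₀|) + 1 / N) := by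
        rw [EConf_const_mul, EConf_add, EConf_const]
    _ ≤ A / L * (max C 1 * r + max C 1 * (N : ℝ)⁻¹) := by
        rw [one_div]
        gcongr
        · exact (hmoment N hN).trans (by gcongr; exact le_max_left _ _)
        · exact le_mul_of_one_le_left (by positivity) (le_max_right _ _)
    _ = A / L * max C 1 * (r + (N : ℝ)⁻¹) := by ring

theorem stmt8_general (hm₀ : m₀ ∈ Set.Icc (0 : ℝ) 1)
    (hmax : ∀ m ∈ Set.Icc (0 : ℝ) 1, ptilde J h m ≤ ptilde J h m₀)
    (huniq : ∀ m ∈ Set.Icc (0 : ℝ) 1, ptilde J h m = ptilde J h m₀ → m = m₀)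
    (hder0 : ∀ l : ℕ, l ≤ 2 * k → iteratedDeriv l (Lone J h) m₀ = 0)
    (hderpos : 0 < iteratedDeriv (2 * k + 1) (Lone J h) m₀) :
    ∃ K : ℝ, ∀ N : ℕ, 1 ≤ N →
      let W : Config N → ℝ :=
        fun σ => ((Msum σ : ℝ) - N * m₀) / (N : ℝ) ^ ((2 * (k : ℝ) + 1) / (2 * (k : ℝ) + 2))
      let c₀ : ℝ := 2 * (N : ℝ) ^ ((2 * (k : ℝ) + 1) / ((k : ℝ) + 1)) / Ltwo J h m₀
      EConf N J h
          (fun σ => |1 - c₀ / 2 * condE2 N J h (fun σ σ' => (W σ - W σ') ^ 2) σ|)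
        ≤ K * ((N : ℝ) ^ (-(1 : ℝ) / (2 * (k : ℝ) + 2)) + (N : ℝ)⁻¹) := by
  have hlt : m₀ < 1 := lt_one_of_iteratedDeriv_Lone hm₀.2 hder0 hderpos
  have hcrit : m₀ ^ 2 = (1 - m₀) * Real.exp (2 * tauFun J h m₀) :=
    sq_eq_of_Lone_eq_zero hlt (by simpa using hder0 0 (Nat.zero_le _))
  have hfree : ∀ m ∈ Set.Icc (0 : ℝ) 1, m ≠ m₀ → freeEnergy J h m < freeEnergy J h m₀ :=
    freeEnergy_lt_of_unique_max_ptilde hm₀.1 hcrit hmax huniq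
  obtain ⟨K, hK⟩ := exists_EConf_abs_one_sub_incrementSq_div_le hm₀ hlt hfree hder0 hderpos
  refine ⟨K, fun N hN => ?_⟩
  simp only [scaled_condE2_eq_incrementSq_div hN]
  exact hK N hN

end SecondMoment

/-- Control of the conditional second moment in Stein's method: with
`W = (M - N m₀)/N^{(2k+1)/(2k+2)}` and `c₀ = 2 N^{(2k+1)/(k+1)}/L₂(m₀)`,
`E|1 - (c₀/2) E[(W - W')² | W]| ≤ K (N^{-1/(2k+2)} + N^{-1})`. -/
theorem stmt8 (J h : ℝ) (hJ : 0 ≤ J) (k : ℕ) (hk : k = 0 ∨ k = 1)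
    (m₀ : ℝ) (hm₀ : m₀ ∈ Set.Icc (0:ℝ) 1)
    (hmax : ∀ m ∈ Set.Icc (0:ℝ) 1, ptilde J h m ≤ ptilde J h m₀)
    (huniq : ∀ m ∈ Set.Icc (0:ℝ) 1, ptilde J h m = ptilde J h m₀ → m = m₀)
    (hder0 : ∀ l : ℕ, l ≤ 2*k → iteratedDeriv l (Lone J h) m₀ = 0)
    (hderpos : 0 < iteratedDeriv (2*k+1) (Lone J h) m₀) :
    ∃ K : ℝ, ∀ N : ℕ, 1 ≤ N →
      let W : Config N → ℝ :=
        fun σ => ((Msum σ : ℝ) - N * m₀) / (N:ℝ) ^ ((2*(k:ℝ)+1)/(2*(k:ℝ)+2))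
      let c₀ : ℝ := 2 * (N:ℝ) ^ ((2*(k:ℝ)+1)/((k:ℝ)+1)) / Ltwo J h m₀
      EConf N J h
          (fun σ => |1 - c₀ / 2 * condE2 N J h (fun σ σ' => (W σ - W σ')^2) σ|)
        ≤ K * ((N:ℝ) ^ (-(1:ℝ)/(2*(k:ℝ)+2)) + (N:ℝ)⁻¹) :=
  stmt8_general hm₀ hmax huniq hder0 hderpos
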